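/- arXiv:2401.03866 — 6 statements merged into one kernel-verified Lean document; each statement's English description precedes it below -/
import Mathlib

section
/- Every letter appears in the democratic sequence with exactly its assigned frequency: for every letter a ∈ ℕ, the limit as N → ∞ of (1/N)·#{n : 1 ≤ n ≤ N, u(n) = a} exists and equals λ(a). -/
open Filter Finset Topology

/-- The `M`-frequency of the letter `a` in the sequence `u` (indexed from 1):
`λ_M(a) = #{n : 1 ≤ n ≤ M, u n = a} / M`. -/
noncomputable def demoFreq (u : ℕ → ℕ) (M a : ℕ) : ℝ :=
  (((Finset.Icc 1 M).filter fun n => u n = a).card : ℝ) / M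

/-- The `M`-deficit of the letter `a`: `D_M(a) = λ(a) - λ_M(a)`. -/
noncomputable def demoDeficit (lam : ℕ → ℝ) (u : ℕ → ℕ) (M a : ℕ) : ℝ :=
  lam a - demoFreq u M a

/-- `u` is the democratic sequence for the frequencies `lam`: `u 1 = 0`, and for each `M ≥ 1`,
either the maximal deficit at step `M` is positive and `u (M+1)` is the least letter attaining
the maximum of the deficits, or all deficits are nonpositive and `u (M+1) = 0`. -/
def IsDemocratic (lam : ℕ → ℝ) (u : ℕ → ℕ) : Prop :=
  u 1 = 0 ∧
    ∀ M : ℕ, 1 ≤ M →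
      ((0 < demoDeficit lam u M (u (M + 1)) ∧
          IsLeast {a : ℕ | ∀ b : ℕ, demoDeficit lam u M b ≤ demoDeficit lam u M a}
            (u (M + 1))) ∨
        ((∀ a : ℕ, demoDeficit lam u M a ≤ 0) ∧ u (M + 1) = 0))

/-- Scaled deficit. -/
noncomputable def sdef (lam : ℕ → ℝ) (u : ℕ → ℕ) (M a : ℕ) : ℝ :=
  M * lam a - (((Finset.Icc 1 M).filter fun n => u n = a).card : ℝ)

lemma sdef_eq (lam : ℕ → ℝ) (u : ℕ → ℕ) (M a : ℕ) (hM : 1 ≤ M) :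
    sdef lam u M a = M * demoDeficit lam u M a := by
  have : (M : ℝ) ≠ 0 := by positivity
  unfold sdef demoDeficit demoFreq
  field_simp

lemma sdef_succ (lam : ℕ → ℝ) (u : ℕ → ℕ) (M a : ℕ) :
    sdef lam u (M + 1) a = sdef lam u M a + lam a - (if a = u (M + 1) then 1 else 0) := by
  unfold sdef
  rw [← Finset.insert_Icc_right_eq_Icc_add_one (by omega), Finset.filter_insert]
  by_cases h : u (M + 1) = a
  · rw [if_pos h, if_pos h.symm, Finset.card_insert_of_notMem (by simp)]
    push_cast
    ring
  · rw [if_neg h, if_neg (fun h' => h h'.symm)]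
    push_cast
    ring

lemma sdef_max (lam : ℕ → ℝ) (u : ℕ → ℕ)
    (hpos : ∀ a : ℕ, 0 < lam a) (hdem : IsDemocratic lam u) (M b : ℕ) :
    sdef lam u M b ≤ sdef lam u M (u (M + 1)) := by
  rcases Nat.eq_zero_or_pos M with rfl | hM
  · simp [sdef]
  · rw [sdef_eq _ _ _ _ hM, sdef_eq _ _ _ _ hM]
    rcases hdem.2 M hM with h | h
    · exact mul_le_mul_of_nonneg_left (h.2.1 b) (by positivity)
    · exfalso
      obtain ⟨a, ha⟩ := Infinite.exists_notMem_finset ((Finset.Icc 1 M).image u)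
      have h1 := h.1 a
      have h2 : ((Finset.Icc 1 M).filter fun n => u n = a) = ∅ := by
        rw [Finset.filter_eq_empty_iff]
        intro n hn hna
        exact ha (Finset.mem_image.2 ⟨n, hn, hna⟩)
      simp only [demoDeficit, demoFreq, h2] at h1
      have := hpos a
      simp at h1
      linarith

lemma sdef_sq (lam : ℕ → ℝ) (u : ℕ → ℕ)
    (hpos : ∀ a : ℕ, 0 < lam a) (hsum : HasSum lam 1) (hdem : IsDemocratic lam u) (M : ℕ) :
    ∃ s : ℝ, s ≤ 2 * M ∧ HasSum (fun a => sdef lam u M a ^ 2) s := by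
  have hle1 : ∀ a, lam a ≤ 1 := fun a => le_hasSum hsum a (fun b _ => (hpos b).le)
  have hsq : ∀ a, lam a ^ 2 ≤ lam a := fun a => by nlinarith [hpos a, hle1 a]
  have hS2 : Summable (fun a => lam a ^ 2) :=
    Summable.of_nonneg_of_le (fun a => sq_nonneg _) hsq hsum.summable
  have hS2' : ∑' a, lam a ^ 2 ≤ 1 := hasSum_le hsq hS2.hasSum hsum
  induction M with
  | zero => exact ⟨0, by simp, by simpa [sdef] using hasSum_zero⟩
  | succ M ih =>
    obtain ⟨s, hs, hsS⟩ := ih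
    set c := u (M + 1) with hc
    have hT : Summable (fun a => sdef lam u M a * lam a) := by
      refine Summable.of_norm_bounded (hsS.summable.add hS2) (fun a => ?_)
      rw [Real.norm_eq_abs, abs_le]
      constructor <;> nlinarith [sq_nonneg (sdef lam u M a + lam a),
        sq_nonneg (sdef lam u M a - lam a), sq_nonneg (sdef lam u M a), sq_nonneg (lam a)]
    have hT' : ∑' a, sdef lam u M a * lam a ≤ sdef lam u M c * 1 :=
      hasSum_le (fun a => mul_le_mul_of_nonneg_right (sdef_max lam u hpos hdem M a) (hpos a).le)
        hT.hasSum (hsum.mul_left _)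
    have hI := hasSum_ite_eq c (1 - 2 * sdef lam u M c - 2 * lam c)
    have hall := ((hsS.add (hT.hasSum.mul_left 2)).add hS2.hasSum).add hI
    refine ⟨s + 2 * ∑' b, sdef lam u M b * lam b + ∑' b, lam b ^ 2 +
      (1 - 2 * sdef lam u M c - 2 * lam c), ?_, ?_⟩
    rotate_left
    · convert hall using 1
      funext a
      rw [sdef_succ, ← hc]
      by_cases h : a = c
      · subst h
        simp only [if_true]
        ring
      · simp only [if_neg h]
        ring
    · push_cast
      linarith [hpos c]

/-- Every letter appears in the democratic sequence with exactly its assigned frequency. -/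
theorem democratic_frequency (lam : ℕ → ℝ) (u : ℕ → ℕ)
    (hpos : ∀ a : ℕ, 0 < lam a) (hsum : HasSum lam 1) (hmono : Antitone lam)
    (hdem : IsDemocratic lam u) :
    ∀ a : ℕ, Tendsto (fun N : ℕ => demoFreq u N a) atTop (𝓝 (lam a)) := by
  intro a
  have hlim : Tendsto (fun N : ℕ => √(2 / (N : ℝ))) atTop (𝓝 0) := by
    have := (tendsto_const_div_atTop_nhds_zero_nat (2 : ℝ)).sqrt
    simpa using this
  rw [tendsto_iff_dist_tendsto_zero]
  refine squeeze_zero' (Eventually.of_forall fun _ => dist_nonneg) ?_ hlim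
  filter_upwards [eventually_ge_atTop 1] with N hN
  obtain ⟨s, hs, hS⟩ := sdef_sq lam u hpos hsum hdem N
  have h1 : sdef lam u N a ^ 2 ≤ 2 * N :=
    (le_hasSum hS a (fun b _ => sq_nonneg _)).trans hs
  rw [sdef_eq _ _ _ _ hN] at h1
  have hN' : (0 : ℝ) < N := by exact_mod_cast hN
  rw [dist_comm, Real.dist_eq]
  apply Real.abs_le_sqrt
  change demoDeficit lam u N a ^ 2 ≤ _
  rw [le_div_iff₀ hN']
  have : (N : ℝ) * (demoDeficit lam u N a ^ 2 * N) ≤ N * 2 := by nlinarith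
  exact le_of_mul_le_mul_left this hN'
end

section
/- For every letter b ∈ ℕ, the upper frequency of b in the democratic sequence is at most its assigned frequency: limsup_{N→∞} (1/N)·#{n : 1 ≤ n ≤ N, u(n) = b} ≤ λ(b). -/
open Filter Finset Topology

theorem demo_count_le (lam : ℕ → ℝ) (u : ℕ → ℕ)
    (hpos : ∀ a : ℕ, 0 < lam a) (hdem : IsDemocratic lam u) (b : ℕ) (N : ℕ) :
    (((Finset.Icc 1 N).filter fun n => u n = b).card : ℝ) ≤ N * lam b + 1 := by
  have hb := hpos b
  induction N with
  | zero => simp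
  | succ M ih =>
    have hI : Finset.Icc 1 (M + 1) = insert (M + 1) (Finset.Icc 1 M) := by
      ext x
      simp only [Finset.mem_Icc, Finset.mem_insert]
      omega
    rw [hI, Finset.filter_insert]
    push_cast
    split_ifs with h
    · have h1 : (((insert (M+1) ((Finset.Icc 1 M).filter fun n => u n = b)).card : ℕ) : ℝ)
          ≤ (((Finset.Icc 1 M).filter fun n => u n = b).card : ℝ) + 1 := by
        exact_mod_cast Finset.card_insert_le _ _
      rcases Nat.eq_zero_or_pos M with rfl | hM
      · simp
        exact hb.le
      · have hM' : (0 : ℝ) < M := by exact_mod_cast hM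
        rcases hdem.2 M hM with ⟨h2, -⟩ | ⟨h2, -⟩
        · rw [h, demoDeficit, demoFreq, sub_pos, div_lt_iff₀ hM'] at h2
          nlinarith
        · exfalso
          obtain ⟨a, ha⟩ := Infinite.exists_notMem_finset ((Finset.Icc 1 M).image u)
          have h3 := h2 a
          have h4 : (Finset.Icc 1 M).filter (fun n => u n = a) = ∅ := by
            rw [Finset.filter_eq_empty_iff]
            intro n hn hna
            exact ha (Finset.mem_image.2 ⟨n, hn, hna⟩)
          rw [demoDeficit, demoFreq, h4] at h3
          simp at h3
          linarith [hpos a]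
    · nlinarith

/-- The upper frequency of every letter is at most its assigned frequency. -/
theorem democratic_limsup_le (lam : ℕ → ℝ) (u : ℕ → ℕ)
    (hpos : ∀ a : ℕ, 0 < lam a) (hsum : HasSum lam 1) (hmono : Antitone lam)
    (hdem : IsDemocratic lam u) :
    ∀ b : ℕ, Filter.limsup (fun N : ℕ => demoFreq u N b) atTop ≤ lam b := by
  intro b
  have ht : Tendsto (fun N : ℕ => lam b + 1 / (N : ℝ)) atTop (𝓝 (lam b)) := by
    simpa using tendsto_const_nhds.add (tendsto_one_div_atTop_nhds_zero_nat (𝕜 := ℝ))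
  rw [← ht.limsup_eq]
  refine Filter.limsup_le_limsup ?_ ?_ ht.isBoundedUnder_le
  · filter_upwards [eventually_gt_atTop 0] with N hN
    have hN' : (0 : ℝ) < N := by exact_mod_cast hN
    rw [demoFreq, div_le_iff₀ hN']
    have := demo_count_le lam u hpos hdem b N
    field_simp
    linarith
  · refine Filter.IsCoboundedUnder.of_frequently_ge (a := 0) (Filter.Frequently.of_forall fun N => ?_)
    rw [demoFreq]
    positivity
end

section
/- Every letter of the alphabet appears at least once in the democratic sequence: for every a ∈ ℕ there exists n ≥ 1 with u(n) = a. -/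
open Filter Finset Topology

/-- Every letter of the alphabet appears at least once in the democratic sequence. -/
theorem democratic_every_letter_appears (lam : ℕ → ℝ) (u : ℕ → ℕ)
    (hpos : ∀ a : ℕ, 0 < lam a) (hsum : HasSum lam 1) (hmono : Antitone lam)
    (hdem : IsDemocratic lam u) :
    ∀ a : ℕ, ∃ n : ℕ, 1 ≤ n ∧ u n = a := by
  intro a
  by_contra hcon
  push Not at hcon
  have ha0 : ∀ M, demoDeficit lam u M a = lam a := by
    intro M
    have : ((Finset.Icc 1 M).filter fun n => u n = a) = ∅ := by
      apply Finset.filter_eq_empty_iff.2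
      intro n hn
      exact hcon n (Finset.mem_Icc.1 hn).1
    simp [demoDeficit, demoFreq, this]
  have hstep : ∀ M, 1 ≤ M → lam a ≤ demoDeficit lam u M (u (M + 1)) := by
    intro M hM
    rcases hdem.2 M hM with ⟨_, h⟩ | ⟨h, _⟩
    · have := h.1 a
      rwa [ha0] at this
    · have := h a
      rw [ha0] at this
      exact absurd this (not_le.2 (hpos a))
  have hS : {b | lam a ≤ lam b}.Finite := by
    have h1 := hsum.summable.tendsto_cofinite_zero
    have h2 := h1.eventually (gt_mem_nhds (hpos a))
    rw [Filter.eventually_cofinite] at h2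
    simpa using h2
  have hfreq : ∀ M b, 0 ≤ demoFreq u M b := by
    intro M b; unfold demoFreq; positivity
  have hmem : ∀ n, 1 ≤ n → lam a ≤ lam (u n) := by
    intro n hn
    rcases Nat.lt_or_ge 1 n with h | h
    · obtain ⟨M, rfl⟩ : ∃ M, n = M + 1 := ⟨n - 1, by omega⟩
      have h1 := hstep M (by omega)
      have h2 := hfreq M (u (M + 1))
      unfold demoDeficit at h1
      linarith
    · have : n = 1 := by omega
      subst this
      rw [hdem.1]
      exact hmono (Nat.zero_le a)
  have hcount : ∀ M, 1 ≤ M → ∀ b, lam a ≤ lam b →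
      ((((Finset.Icc 1 M).filter fun n => u n = b).card : ℕ) : ℝ) ≤ M * (lam b - lam a) + 1 := by
    intro M hM
    induction M, hM using Nat.le_induction with
    | base =>
      intro b hb
      have h1 : ((Finset.Icc 1 1).filter fun n => u n = b).card ≤ 1 :=
        (Finset.card_filter_le _ _).trans (by simp)
      have h2 : ((((Finset.Icc 1 1).filter fun n => u n = b).card : ℕ) : ℝ) ≤ 1 := by
        exact_mod_cast h1
      push_cast
      linarith
    | succ M hM ih =>
      intro b hb
      have hI : Finset.Icc 1 (M + 1) = insert (M + 1) (Finset.Icc 1 M) := by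
        ext x; simp; omega
      rw [hI, Finset.filter_insert]
      push_cast
      by_cases hu : u (M + 1) = b
      · rw [if_pos hu, Finset.card_insert_of_notMem (by simp)]
        have h1 := hstep M hM
        rw [hu] at h1
        unfold demoDeficit demoFreq at h1
        have hMp : (0 : ℝ) < M := by exact_mod_cast hM
        have h2 : ((((Finset.Icc 1 M).filter fun n => u n = b).card : ℕ) : ℝ) / M
            ≤ lam b - lam a := by linarith
        rw [div_le_iff₀ hMp] at h2
        push_cast
        linarith
      · rw [if_neg hu]
        have := ih b hb
        linarith
  have hcard : ∀ M : ℕ, 1 ≤ M → (M : ℝ) * lam a ≤ 1 := by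
    intro M hM
    have h1 := Finset.card_eq_sum_card_fiberwise (s := Finset.Icc 1 M) (t := hS.toFinset) (f := u)
      (by
        intro n hn
        have hn' := Finset.mem_Icc.1 (Finset.mem_coe.1 hn)
        simpa using hmem n hn'.1)
    have h2 : (M : ℝ) = ∑ b ∈ hS.toFinset,
        ((((Finset.Icc 1 M).filter fun n => u n = b).card : ℕ) : ℝ) := by
      rw [Nat.card_Icc, Nat.add_sub_cancel] at h1
      exact_mod_cast h1
    have h3 : (M : ℝ) ≤ ∑ b ∈ hS.toFinset, (M * (lam b - lam a) + 1) := by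
      refine h2.le.trans ?_
      apply Finset.sum_le_sum
      intro b hb
      exact hcount M hM b (by simpa using hb)
    have h4 : ∑ b ∈ hS.toFinset, lam b ≤ 1 :=
      sum_le_hasSum _ (fun b _ => (hpos b).le) hsum
    rw [Finset.sum_add_distrib, ← Finset.mul_sum, Finset.sum_sub_distrib] at h3
    simp only [Finset.sum_const, nsmul_eq_mul, mul_one] at h3
    have h5 : (1 : ℝ) ≤ (hS.toFinset.card : ℝ) := by
      have : 0 < hS.toFinset.card := Finset.card_pos.2 ⟨a, by simp⟩
      exact_mod_cast this
    have hMp : (0 : ℝ) < M := by exact_mod_cast hM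
    by_contra hc
    push Not at hc
    nlinarith
  obtain ⟨n, hn⟩ := exists_nat_gt (1 / lam a)
  have h6 := hcard (n + 1) (by omega)
  rw [div_lt_iff₀ (hpos a)] at hn
  push_cast at h6
  have := hpos a
  linarith
end

section
/- No letter has lower frequency strictly smaller than its assigned frequency: for every letter a ∈ ℕ, liminf_{N→∞} (1/N)·#{n : 1 ≤ n ≤ N, u(n) = a} ≥ λ(a). -/
open Filter Finset Topology

/-- count -/
noncomputable def demoCnt (u : ℕ → ℕ) (M a : ℕ) : ℝ :=
  (((Finset.Icc 1 M).filter fun n => u n = a).card : ℝ)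

lemma demoCnt_succ (u : ℕ → ℕ) (M a : ℕ) :
    demoCnt u (M+1) a = demoCnt u M a + (if u (M+1) = a then 1 else 0) := by
  unfold demoCnt
  rw [← Finset.insert_Icc_right_eq_Icc_add_one (by omega), Finset.filter_insert]
  split_ifs with h
  · rw [Finset.card_insert_of_notMem (by simp)]
    push_cast; rfl
  · simp

lemma demoCnt_nonneg (u : ℕ → ℕ) (M a : ℕ) : 0 ≤ demoCnt u M a := by
  unfold demoCnt; positivity

lemma demo_mul (lam : ℕ → ℝ) (u : ℕ → ℕ) (M a : ℕ) (hM : 1 ≤ M) :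
    M * demoDeficit lam u M a = M * lam a - demoCnt u M a := by
  have : (M:ℝ) ≠ 0 := by positivity
  unfold demoDeficit demoFreq demoCnt
  field_simp

/-- shifted deficit, positive part -/
noncomputable def demoX (lam : ℕ → ℝ) (u : ℕ → ℕ) (e : ℝ) (M a : ℕ) : ℝ :=
  max (M * (lam a - e) - demoCnt u M a) 0

lemma demo_sq_step (x d : ℝ) (h1 : -1 ≤ d) (h2 : d ≤ 1) :
    (max (x + d) 0)^2 ≤ (max x 0)^2 + 2 * (max x 0 * d) + 1 := by
  have hd : d^2 ≤ 1 := by nlinarith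
  rcases le_total (x+d) 0 with h | h
  · rw [max_eq_right h]
    nlinarith [sq_nonneg (max x 0 + d)]
  · rw [max_eq_left h]
    nlinarith [le_max_left x 0, le_max_right x 0]

lemma demo_drift (lam : ℕ → ℝ) (u : ℕ → ℕ)
    (hpos : ∀ a : ℕ, 0 < lam a) (hsum : HasSum lam 1)
    (hdem : IsDemocratic lam u) (e : ℝ) (he : 0 < e) (K : ℕ)
    (hK : ∀ a, K ≤ a → lam a ≤ e) (M : ℕ) (hM : 1 ≤ M) :
    ∑ a ∈ Finset.range K, demoX lam u e M a *
      ((lam a - e) - (if u (M+1) = a then 1 else 0)) ≤ 0 := by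
  have hM0 : (0:ℝ) < M := by positivity
  have key0 : (∀ a, demoX lam u e M a ≤ 0) → ∑ a ∈ Finset.range K, demoX lam u e M a *
      ((lam a - e) - (if u (M+1) = a then 1 else 0)) ≤ 0 := by
    intro h
    apply le_of_eq
    apply Finset.sum_eq_zero
    intro a _
    have : demoX lam u e M a = 0 := le_antisymm (h a) (le_max_right _ _)
    rw [this, zero_mul]
  rcases hdem.2 M hM with ⟨_, hl⟩ | ⟨hn, _⟩
  · have hX : ∀ a, demoX lam u e M a ≤ demoX lam u e M (u (M+1)) := by
      intro a
      have h1 := mul_le_mul_of_nonneg_left (hl.1 a) hM0.le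
      rw [demo_mul _ _ _ _ hM, demo_mul _ _ _ _ hM] at h1
      unfold demoX
      apply max_le_max _ le_rfl
      linarith
    by_cases hs : u (M+1) < K
    · have hX0 : 0 ≤ demoX lam u e M (u (M+1)) := le_max_right _ _
      have h1 : ∑ a ∈ Finset.range K, demoX lam u e M a * (lam a - e) ≤
          ∑ a ∈ Finset.range K, demoX lam u e M (u (M+1)) * lam a := by
        apply Finset.sum_le_sum
        intro a _
        have h0 : 0 ≤ demoX lam u e M a := le_max_right _ _
        nlinarith [hX a, hpos a]
      have h2 : ∑ a ∈ Finset.range K, lam a ≤ 1 :=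
        sum_le_hasSum _ (fun a _ => (hpos a).le) hsum
      rw [← Finset.mul_sum] at h1
      simp only [mul_sub (demoX lam u e M _) (lam _ - e), Finset.sum_sub_distrib]
      have h3 : ∑ a ∈ Finset.range K, demoX lam u e M a * (if u (M+1) = a then 1 else 0)
          = demoX lam u e M (u (M+1)) := by
        simp [hs]
      rw [h3]
      nlinarith
    · apply key0
      intro a
      refine (hX a).trans ?_
      unfold demoX
      apply max_le _ le_rfl
      have := hK _ (not_lt.1 hs)
      nlinarith [demoCnt_nonneg u M (u (M+1))]
  · apply key0
    intro a
    apply max_le _ le_rfl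
    have h1 := mul_le_mul_of_nonneg_left (hn a) hM0.le
    rw [demo_mul _ _ _ _ hM] at h1
    nlinarith

lemma demo_pot (lam : ℕ → ℝ) (u : ℕ → ℕ)
    (hpos : ∀ a : ℕ, 0 < lam a) (hsum : HasSum lam 1)
    (hdem : IsDemocratic lam u) (e : ℝ) (he : 0 < e) (he1 : e < 1) (K : ℕ)
    (hK : ∀ a, K ≤ a → lam a ≤ e) (M : ℕ) (hM : 1 ≤ M) :
    ∑ a ∈ Finset.range K, demoX lam u e M a ^ 2 ≤ K * M := by
  have hl1 : ∀ a, lam a ≤ 1 := fun a => le_hasSum hsum a (fun b _ => (hpos b).le)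
  induction M, hM using Nat.le_induction with
  | base =>
    have : ∑ a ∈ Finset.range K, demoX lam u e 1 a ^ 2 ≤ ∑ a ∈ Finset.range K, (1:ℝ) := by
      apply Finset.sum_le_sum
      intro a _
      have h0 : 0 ≤ demoX lam u e 1 a := le_max_right _ _
      have h1 : demoX lam u e 1 a ≤ 1 := by
        apply max_le _ zero_le_one
        have := demoCnt_nonneg u 1 a
        have := hl1 a
        push_cast
        linarith
      nlinarith
    simpa using this
  | succ M hM ih =>
    have hd := demo_drift lam u hpos hsum hdem e he K hK M hM
    have : ∑ a ∈ Finset.range K, demoX lam u e (M+1) a ^ 2 ≤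
        ∑ a ∈ Finset.range K, (demoX lam u e M a ^ 2 + 2 * (demoX lam u e M a *
          ((lam a - e) - (if u (M+1) = a then 1 else 0))) + 1) := by
      apply Finset.sum_le_sum
      intro a _
      have h1 := hl1 a
      have h2 := hpos a
      have h3 := demo_sq_step (M * (lam a - e) - demoCnt u M a)
        ((lam a - e) - (if u (M+1) = a then 1 else 0))
      have h4 : demoX lam u e (M+1) a = max ((M * (lam a - e) - demoCnt u M a) +
        ((lam a - e) - (if u (M+1) = a then 1 else 0))) 0 := by
        unfold demoX
        rw [demoCnt_succ]
        push_cast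
        congr 1
        ring
      rw [h4]
      by_cases hua : u (M+1) = a
      · by_cases hle : e ≤ lam a
        · apply h3 <;> simp only [hua, if_true] <;> linarith
        · -- here the increment is below `-1`
          have hx : M * (lam a - e) - demoCnt u M a ≤ 0 := by
            nlinarith [demoCnt_nonneg u M a, Nat.cast_nonneg (α := ℝ) M]
          have hx2 : demoX lam u e M a = 0 := max_eq_right hx
          rw [hx2, max_eq_right]
          · norm_num
          · simp only [hua, if_true]; linarith
      · apply h3 <;> simp only [hua, if_false] <;> linarith
    rw [Finset.sum_add_distrib, Finset.sum_add_distrib, ← Finset.mul_sum] at this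
    simp only [Finset.sum_const, Finset.card_range, nsmul_eq_mul, mul_one] at this
    push_cast
    linarith

/-- No letter has lower frequency strictly smaller than its assigned frequency. -/
theorem democratic_liminf_ge (lam : ℕ → ℝ) (u : ℕ → ℕ)
    (hpos : ∀ a : ℕ, 0 < lam a) (hsum : HasSum lam 1) (hmono : Antitone lam)
    (hdem : IsDemocratic lam u) :
    ∀ a : ℕ, lam a ≤ Filter.liminf (fun N : ℕ => demoFreq u N a) atTop := by
  intro a
  have hco : IsCoboundedUnder (· ≥ ·) atTop (fun N : ℕ => demoFreq u N a) := by
    apply IsBoundedUnder.isCoboundedUnder_ge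
    refine ⟨1, ?_⟩
    rw [eventually_map]
    refine Eventually.of_forall fun N => ?_
    unfold demoFreq
    apply div_le_one_of_le₀ _ (Nat.cast_nonneg _)
    have := Finset.card_filter_le (Finset.Icc 1 N) (fun n => u n = a)
    rw [Nat.card_Icc] at this
    exact_mod_cast this
  suffices h : ∀ e : ℝ, 0 < e → e < 1 →
      lam a - 2 * e ≤ Filter.liminf (fun N : ℕ => demoFreq u N a) atTop by
    apply le_of_forall_pos_le_add
    intro δ hδ
    have h1 := h (min (δ/2) (1/2)) (by positivity)
      (lt_of_le_of_lt (min_le_right _ _) (by norm_num))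
    have := min_le_left (δ/2) (1/2)
    linarith
  intro e he he1
  apply le_liminf_of_le hco
  have ht : ∀ᶠ n in atTop, lam n < e :=
    (hsum.summable.tendsto_atTop_zero).eventually (gt_mem_nhds he)
  obtain ⟨K0, hK0⟩ := eventually_atTop.1 ht
  set K := max K0 (a+1) with hKdef
  have hK : ∀ b, K ≤ b → lam b ≤ e := fun b hb => (hK0 b ((le_max_left _ _).trans hb)).le
  have haK : a < K := lt_of_lt_of_le (Nat.lt_succ_self a) (le_max_right _ _)
  obtain ⟨N0, hN0⟩ := exists_nat_ge ((K:ℝ) / e^2)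
  filter_upwards [eventually_ge_atTop (max N0 1)] with N hN
  have hN1 : 1 ≤ N := (le_max_right _ _).trans hN
  have hNr : (0:ℝ) < N := by positivity
  have hN2 : (N0:ℝ) ≤ N := by exact_mod_cast (le_max_left _ _).trans hN
  have hKN : (K:ℝ) ≤ N * e^2 := (div_le_iff₀ (by positivity)).1 (hN0.trans hN2)
  have hp := demo_pot lam u hpos hsum hdem e he he1 K hK N hN1
  have h1 : demoX lam u e N a ^ 2 ≤ K * N :=
    (Finset.single_le_sum (f := fun b => demoX lam u e N b ^ 2)
      (fun b _ => sq_nonneg _) (Finset.mem_range.2 haK)).trans hp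
  have h2 : demoX lam u e N a ≤ e * N := by
    refine (sq_le_sq₀ (le_max_right _ _) (by positivity)).1 ?_
    refine h1.trans ?_
    nlinarith [mul_le_mul_of_nonneg_right hKN hNr.le]
  have h3 : N * (lam a - e) - demoCnt u N a ≤ e * N := (le_max_left _ _).trans h2
  change lam a - 2 * e ≤ demoCnt u N a / N
  rw [le_div_iff₀ hNr]
  linarith
end

section
/- Let 0 < c < 1 and let (a_m)_{m≥1} be any sequence of real numbers. Then there exists a real number β > 1 such that for every m ≥ 1 the power β^m lies, modulo 1, in the closed interval [a_m, a_m + c]: for every m ≥ 1 there exists an integer q_m with a_m ≤ β^m − q_m ≤ a_m + c. -/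
theorem beta_step (c : ℝ) (hc0 : 0 < c) (hc1 : c < 1) (b : ℝ) (n : ℕ) (l r : ℝ)
    (hl : 2 / c ≤ l) (hlr : l ≤ r) (h : r ^ (n+1) - l ^ (n+1) = c) :
    ∃ p : ℝ × ℝ, l ≤ p.1 ∧ p.1 ≤ p.2 ∧ p.2 ≤ r ∧
      ∃ q : ℤ, p.1 ^ (n+2) = b + q ∧ p.2 ^ (n+2) = b + q + c := by
  have hB : 0 < 2 / c := by positivity
  have hl0 : 0 < l := by linarith
  have hr0 : 0 < r := by linarith
  have h2 : 2 ≤ l * c := by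
    rwa [div_le_iff₀ hc0] at hl
  have hlen : l ^ (n+2) + 2 ≤ r ^ (n+2) := by
    have e1 : r ^ (n+2) = r * r ^ (n+1) := by ring
    have e2 : l ^ (n+2) = l * l ^ (n+1) := by ring
    have e3 : l * r ^ (n+1) ≤ r * r ^ (n+1) := by gcongr
    have e4 : r ^ (n+1) = l ^ (n+1) + c := by linarith
    rw [e1, e2]
    calc l * l ^ (n+1) + 2 ≤ l * l ^ (n+1) + l * c := by linarith
      _ = l * r ^ (n+1) := by rw [e4]; ring
      _ ≤ _ := e3
  have hq1 := Int.le_ceil (l ^ (n+2) - b)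
  have hq2 := Int.ceil_lt_add_one (l ^ (n+2) - b)
  set q := ⌈l ^ (n+2) - b⌉
  have hln : 0 < l ^ (n+2) := by positivity
  have hu0 : 0 ≤ b + q := by linarith
  have hv0 : 0 ≤ b + q + c := by linarith
  have root : ∀ x : ℝ, 0 ≤ x → ∃ y, 0 ≤ y ∧ y ^ (n+2) = x := fun x hx =>
    ⟨x ^ (((n+2 : ℕ) : ℝ)⁻¹), by positivity, Real.rpow_inv_natCast_pow hx (by omega)⟩
  obtain ⟨u, hu, hu'⟩ := root _ hu0
  obtain ⟨v, hv, hv'⟩ := root _ hv0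
  have key : ∀ x y : ℝ, 0 ≤ y → x ^ (n+2) ≤ y ^ (n+2) → x ≤ y := fun x y hy hxy =>
    le_of_pow_le_pow_left₀ (by omega) hy hxy
  refine ⟨(u, v), key _ _ hu ?_, key _ _ hv ?_, key _ _ hr0.le ?_, q, hu', hv'⟩
  · linarith
  · simp only; linarith
  · simp only; linarith

/-- Given `0 < c < 1` and any sequence of real numbers `(a m)`, there is a real `β > 1`
such that for every `m ≥ 1` the power `β ^ m` lies modulo one in the closed interval
`[a m, a m + c]`. -/
theorem exists_beta_powers_in_intervals (c : ℝ) (hc0 : 0 < c) (hc1 : c < 1) (a : ℕ → ℝ) :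
    ∃ β : ℝ, 1 < β ∧ ∀ m : ℕ, 1 ≤ m →
      ∃ q : ℤ, a m ≤ β ^ m - q ∧ β ^ m - q ≤ a m + c := by
  have step : ∀ (n : ℕ) (p : ℝ × ℝ), ∃ p' : ℝ × ℝ,
      (2 / c ≤ p.1 ∧ p.1 ≤ p.2 ∧ p.2 ^ (n+1) - p.1 ^ (n+1) = c) →
      p.1 ≤ p'.1 ∧ p'.1 ≤ p'.2 ∧ p'.2 ≤ p.2 ∧
      ∃ q : ℤ, p'.1 ^ (n+2) = a (n+2) + q ∧ p'.2 ^ (n+2) = a (n+2) + q + c := by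
    intro n p
    by_cases h : 2 / c ≤ p.1 ∧ p.1 ≤ p.2 ∧ p.2 ^ (n+1) - p.1 ^ (n+1) = c
    · obtain ⟨p', hp'⟩ := beta_step c hc0 hc1 (a (n+2)) n p.1 p.2 h.1 h.2.1 h.2.2
      exact ⟨p', fun _ => hp'⟩
    · exact ⟨p, fun h' => absurd h' h⟩
  choose f hf using step
  let l0 : ℝ := a 1 + ⌈2 / c - a 1⌉
  have hl0 : 2 / c ≤ l0 := by
    have := Int.le_ceil (2 / c - a 1)
    simp only [l0]; linarith
  let s : ℕ → ℝ × ℝ := fun n => Nat.rec (l0, l0 + c) f n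
  have hs : ∀ n, s (n+1) = f n (s n) := fun n => rfl
  have inv : ∀ n, 2 / c ≤ (s n).1 ∧ (s n).1 ≤ (s n).2 ∧
      ∃ q : ℤ, (s n).1 ^ (n+1) = a (n+1) + q ∧ (s n).2 ^ (n+1) = a (n+1) + q + c := by
    intro n
    induction n with
    | zero =>
      refine ⟨hl0, ?_, ⌈2 / c - a 1⌉, ?_, ?_⟩ <;> simp [s, l0, hc0.le]
    | succ n ih =>
      obtain ⟨h1, h2, q, h3, h4⟩ := ih
      obtain ⟨g1, g2, g3, g4⟩ := hf n (s n) ⟨h1, h2, by linarith⟩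
      rw [hs]
      exact ⟨h1.trans g1, g2, g4⟩
  have mon : ∀ n, (s n).1 ≤ (s (n+1)).1 ∧ (s (n+1)).2 ≤ (s n).2 := by
    intro n
    obtain ⟨h1, h2, q, h3, h4⟩ := inv n
    obtain ⟨g1, g2, g3, g4⟩ := hf n (s n) ⟨h1, h2, by linarith⟩
    rw [hs]
    exact ⟨g1, g3⟩
  have hmem := Monotone.ciSup_mem_iInter_Icc_of_antitone
    (f := fun n => (s n).1) (g := fun n => (s n).2)
    (monotone_nat_of_le_succ fun n => (mon n).1)
    (antitone_nat_of_succ_le fun n => (mon n).2) (fun n => (inv n).2.1)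
  rw [Set.mem_iInter] at hmem
  generalize (⨆ n, (s n).1) = β at hmem
  have hB : 1 < 2 / c := by rw [lt_div_iff₀ hc0]; linarith
  refine ⟨β, by linarith [(hmem 0).1, (inv 0).1], ?_⟩
  intro m hm
  obtain ⟨n, rfl⟩ : ∃ n, m = n + 1 := ⟨m - 1, by omega⟩
  obtain ⟨h1, h2, q, h3, h4⟩ := inv n
  obtain ⟨k1, k2⟩ := hmem n
  have i1 : (s n).1 ^ (n+1) ≤ β ^ (n+1) := pow_le_pow_left₀ (by linarith) k1 _
  have i2 : β ^ (n+1) ≤ (s n).2 ^ (n+1) := pow_le_pow_left₀ (by linarith) k2 _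
  exact ⟨q, by linarith, by linarith⟩
end

section
/- The set of measures associated with exponential sequences is dense in the space of probability measures on the torus: for every probability measure μ on the torus ℝ/ℤ and every neighborhood U of μ in the topology of weak convergence of probability measures, there exist a real number β > 1, a probability measure ν on the torus, and a strictly increasing sequence (N_j) of positive integers, such that the empirical measures (1/N_j)·∑_{n=1}^{N_j} δ_{β^n mod 1} converge weakly to ν as j → ∞, and ν ∈ U. -/
open Filter Topology MeasureTheory BoundedContinuousFunction

lemma aux_step (ε A : ℝ) (hε : 0 < ε) (hε1 : ε ≤ 1) (hA : 2 ≤ A * ε) (hA1 : 1 < A) (n : ℕ) (y l r : ℝ)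
    (hl : A ≤ l) (hlr : l ≤ r) (h : r ^ n - l ^ n = ε) :
    ∃ l' r' : ℝ, l ≤ l' ∧ r' ≤ r ∧ l' ≤ r' ∧ r' ^ (n+1) - l' ^ (n+1) = ε ∧
      ∃ m : ℤ, l' ^ (n+1) = y + m := by
  have hbig : l ^ (n+1) + 2 ≤ r ^ (n+1) := by
    have h0 : 0 ≤ r ^ n := by have : 0 ≤ r := by linarith
                              positivity
    have h1 : l * r ^ n ≤ r * r ^ n := mul_le_mul_of_nonneg_right hlr h0
    have h2 : A * ε ≤ l * ε := mul_le_mul_of_nonneg_right hl hε.le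
    have h3 : r ^ n = l ^ n + ε := by linarith
    have h4 : l * r ^ n = l * l ^ n + l * ε := by rw [h3]; ring
    rw [pow_succ', pow_succ']
    linarith
  have hm1 := Int.le_ceil (l ^ (n+1) - y)
  have hm2 := Int.ceil_lt_add_one (l ^ (n+1) - y)
  set m := ⌈l ^ (n+1) - y⌉
  obtain ⟨l', ⟨hl1, hl2⟩, hl3⟩ := intermediate_value_Icc (f := fun x : ℝ => x ^ (n+1)) hlr
    (by fun_prop) (show y + m ∈ _ from ⟨by linarith, by linarith⟩)
  simp only at hl3
  obtain ⟨r', ⟨hr1, hr2⟩, hr3⟩ := intermediate_value_Icc (f := fun x : ℝ => x ^ (n+1)) hl2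
    (by fun_prop) (show y + m + ε ∈ _ from ⟨by linarith, by linarith⟩)
  simp only at hr3
  exact ⟨l', r', hl1, hr2, hr1, by rw [hr3, hl3]; ring, m, hl3⟩

lemma aux_beta (y : ℕ → ℝ) (ε : ℝ) (hε : 0 < ε) (hε1 : ε ≤ 1) :
    ∃ β : ℝ, 1 < β ∧ ∀ n : ℕ, ∃ m : ℤ, y n + m ≤ β ^ (n+1) ∧ β ^ (n+1) ≤ y n + m + ε := by
  set A : ℝ := 2 / ε with hAdef
  have hA : 2 ≤ A * ε := by rw [hAdef, div_mul_cancel₀ _ hε.ne']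
  have hA1 : 1 < A := by rw [hAdef, lt_div_iff₀ hε]; linarith
  let P : ℕ → ℝ × ℝ → Prop := fun n p => A ≤ p.1 ∧ p.1 ≤ p.2 ∧ p.2 ^ (n+1) - p.1 ^ (n+1) = ε ∧
    ∃ m : ℤ, p.1 ^ (n+1) = y n + m
  have h0 : ∃ p, P 0 p := by
    refine ⟨(y 0 + ⌈A - y 0⌉, y 0 + ⌈A - y 0⌉ + ε), ?_, ?_, ?_, ⌈A - y 0⌉, ?_⟩
    · have := Int.le_ceil (A - y 0)
      simp only; linarith
    · simp only; linarith
    · simp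
    · simp
  have hs : ∀ n (p : {p // P n p}), ∃ q : {q // P (n+1) q}, p.1.1 ≤ q.1.1 ∧ q.1.2 ≤ p.1.2 := by
    rintro n ⟨p, h1, h2, h3, -⟩
    obtain ⟨l', r', a1, a2, a3, a4, a5⟩ := aux_step ε A hε hε1 hA hA1 (n+1) (y (n+1)) _ _ h1 h2 h3
    exact ⟨⟨(l', r'), h1.trans a1, a3, a4, a5⟩, a1, a2⟩
  choose g hg using hs
  let s : ∀ n, {p // P n p} := fun n => Nat.rec ⟨h0.choose, h0.choose_spec⟩ (fun n p => g n p) n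
  have hsucc : ∀ n, s (n+1) = g n (s n) := fun n => rfl
  have hanti : Antitone fun n => Set.Icc (s n).1.1 (s n).1.2 := by
    refine antitone_nat_of_succ_le fun n => ?_
    rw [hsucc]
    exact Set.Icc_subset_Icc (hg n (s n)).1 (hg n (s n)).2
  have hmem := ciSup_mem_iInter_Icc_of_antitone_Icc hanti (fun n => (s n).2.2.1)
  set β := ⨆ n, (s n).1.1
  rw [Set.mem_iInter] at hmem
  have hAβ : A ≤ β := (s 0).2.1.trans (hmem 0).1
  refine ⟨β, by linarith, fun n => ?_⟩
  obtain ⟨b1, b2, b3, m, b4⟩ := (s n).2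
  have c1 : (s n).1.1 ^ (n+1) ≤ β ^ (n+1) := pow_le_pow_left₀ (by linarith) (hmem n).1 _
  have c2 : β ^ (n+1) ≤ (s n).1.2 ^ (n+1) := pow_le_pow_left₀ (by linarith) (hmem n).2 _
  exact ⟨m, by linarith, by linarith⟩

lemma aux_slln (μ : ProbabilityMeasure UnitAddCircle) (s : Finset (UnitAddCircle →ᵇ ℝ)) :
    ∃ y : ℕ → UnitAddCircle, ∀ f ∈ s,
      Tendsto (fun n : ℕ => (∑ i ∈ Finset.range n, f (y i)) / n) atTop
        (𝓝 (∫ x, f x ∂(μ : Measure UnitAddCircle))) := by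
  let M : Measure (ℕ → UnitAddCircle) := Measure.infinitePi (fun _ : ℕ => (μ : Measure UnitAddCircle))
  have key : ∀ f : UnitAddCircle →ᵇ ℝ, ∀ᵐ y ∂M,
      Tendsto (fun n : ℕ => (∑ i ∈ Finset.range n, f (y i)) / n) atTop
        (𝓝 (∫ x, f x ∂(μ : Measure UnitAddCircle))) := by
    intro f
    have hfm : Measurable f := f.continuous.measurable
    have hmp : ∀ i, MeasurePreserving (fun y : ℕ → UnitAddCircle => y i) M μ := fun i =>
      measurePreserving_eval_infinitePi _ i
    have hmap : ∀ i, Measure.map (fun y : ℕ → UnitAddCircle => f (y i)) M = Measure.map f μ := by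
      intro i
      rw [← (hmp i).map_eq, Measure.map_map hfm (by fun_prop)]
      rfl
    have h := ProbabilityTheory.strong_law_ae_real (μ := M) (fun i y => f (y i))
      (((hmp 0).integrable_comp f.continuous.aestronglyMeasurable).2 (f.integrable _))
      (fun i j hij => (ProbabilityTheory.iIndepFun_infinitePi
        (P := fun _ : ℕ => (μ : Measure UnitAddCircle)) (X := fun _ => f) (fun _ => hfm)).indepFun hij)
      (fun i => ⟨(hfm.comp (measurable_pi_apply i)).aemeasurable, (hfm.comp (measurable_pi_apply 0)).aemeasurable, by rw [hmap, hmap]⟩)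
    have e : ∫ y, f (y 0) ∂M = ∫ x, f x ∂(μ : Measure UnitAddCircle) := by
      rw [← (hmp 0).map_eq, integral_map (measurable_pi_apply 0).aemeasurable f.continuous.aestronglyMeasurable]
    rw [e] at h
    exact h
  have hall : ∀ᵐ y ∂M, ∀ f ∈ s, Tendsto (fun n : ℕ => (∑ i ∈ Finset.range n, f (y i)) / n) atTop
        (𝓝 (∫ x, f x ∂(μ : Measure UnitAddCircle))) :=
    (Finset.eventually_all s).2 fun f _ => key f
  exact hall.exists

lemma aux_emp (x : ℕ → UnitAddCircle) (n : ℕ) : ∃ ν : ProbabilityMeasure UnitAddCircle,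
    ∀ f : UnitAddCircle →ᵇ ℝ, ∫ z, f z ∂(ν : Measure UnitAddCircle) =
      (∑ i ∈ Finset.range (n+1), f (x i)) / ((n+1 : ℕ) : ℝ) := by
  let m : Measure UnitAddCircle := ((n+1 : ℕ) : ENNReal)⁻¹ • ∑ i ∈ Finset.range (n+1), Measure.dirac (x i)
  have hm : IsProbabilityMeasure m := by
    constructor
    simp only [m, Measure.smul_apply, Measure.finset_sum_apply, measure_univ, Finset.sum_const,
      Finset.card_range, smul_eq_mul, nsmul_eq_mul, mul_one]
    exact ENNReal.inv_mul_cancel (by simp) (ENNReal.natCast_ne_top _)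
  refine ⟨⟨m, hm⟩, fun f => ?_⟩
  simp only [ProbabilityMeasure.coe_mk, m]
  rw [integral_smul_measure, integral_finset_sum_measure (fun i _ => f.integrable _)]
  simp only [integral_dirac, ENNReal.toReal_inv, ENNReal.toReal_natCast, smul_eq_mul]
  rw [div_eq_inv_mul]

lemma aux_main (μ : ProbabilityMeasure UnitAddCircle) (s : Finset (UnitAddCircle →ᵇ ℝ)) (δ : ℝ)
    (hδ : 0 < δ) :
    ∃ (ν : ProbabilityMeasure UnitAddCircle) (β : ℝ) (N : ℕ → ℕ),
      (1 < β ∧ StrictMono N ∧ 1 ≤ N 0 ∧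
      (∀ f : UnitAddCircle →ᵇ ℝ,
        Tendsto
          (fun j : ℕ =>
            (∑ n ∈ Finset.Icc 1 (N j), f ((β ^ n : ℝ) : UnitAddCircle)) / (N j : ℝ))
          atTop (𝓝 (∫ x, f x ∂(ν : Measure UnitAddCircle))))) ∧
      ∀ f ∈ s, |∫ x, f x ∂(ν : Measure UnitAddCircle) - ∫ x, f x ∂(μ : Measure UnitAddCircle)| ≤ δ := by
  obtain ⟨y, hy⟩ := aux_slln μ s
  have hunif : ∃ ε : ℝ, 0 < ε ∧ ∀ f ∈ s, ∀ a b : UnitAddCircle, dist a b < ε → dist (f a) (f b) < δ := by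
    have : ∀ᶠ p : UnitAddCircle × UnitAddCircle in uniformity UnitAddCircle,
        ∀ f ∈ s, dist (f p.1) (f p.2) < δ := by
      refine (Finset.eventually_all s).2 fun f _ => ?_
      have := CompactSpace.uniformContinuous_of_continuous f.continuous
      exact this (Metric.dist_mem_uniformity hδ)
    obtain ⟨ε, hε, h⟩ := Metric.mem_uniformity_dist.1 this
    exact ⟨ε, hε, fun f hf a b hab => h hab f hf⟩
  obtain ⟨ε, hε, hu⟩ := hunif
  have hsurj : ∀ i, ∃ t : ℝ, (t : UnitAddCircle) = y i := fun i => QuotientAddGroup.mk_surjective (y i)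
  choose t ht using hsurj
  obtain ⟨β, hβ, hb⟩ := aux_beta t (min (ε/2) 1) (by positivity) (min_le_right _ _)
  have hclose : ∀ i, dist ((β ^ (i+1) : ℝ) : UnitAddCircle) (y i) < ε := by
    intro i
    obtain ⟨m, h1, h2⟩ := hb i
    have e : ((β ^ (i+1) : ℝ) : UnitAddCircle) - y i = ((β ^ (i+1) - t i - m : ℝ) : UnitAddCircle) := by
      rw [← ht i]
      have : ((m : ℝ) : UnitAddCircle) = 0 := by
        rw [AddCircle.coe_eq_zero_iff]; exact ⟨m, by simp⟩
      rw [AddCircle.coe_sub, AddCircle.coe_sub, this, sub_zero]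
    rw [dist_eq_norm, e]
    refine lt_of_le_of_lt (QuotientAddGroup.norm_mk_le_norm) ?_
    rw [Real.norm_eq_abs, abs_lt]
    have := min_le_left (ε/2) 1
    constructor <;> linarith
  choose E hE using aux_emp (fun i => ((β ^ (i+1) : ℝ) : UnitAddCircle))
  obtain ⟨ν, φ, hφ, hν⟩ := CompactSpace.tendsto_subseq E
  rw [ProbabilityMeasure.tendsto_iff_forall_integral_tendsto] at hν
  refine ⟨ν, β, fun j => φ j + 1, ⟨hβ, fun a b hab => Nat.succ_lt_succ (hφ hab), by simp, ?_⟩, ?_⟩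
  · intro f
    refine (hν f).congr fun j => ?_
    simp only [Function.comp, hE]
    congr 1
    rw [Finset.range_eq_Ico, Finset.sum_Ico_add' (fun n => f ((β ^ n : ℝ) : UnitAddCircle)) 0 (φ j + 1) 1]
    rfl
  · intro f hf
    have h1 := hν f
    have h2 : Tendsto (fun j => (∑ i ∈ Finset.range (φ j + 1), f (y i)) / ((φ j + 1 : ℕ) : ℝ)) atTop
        (𝓝 (∫ x, f x ∂(μ : Measure UnitAddCircle))) :=
      (hy f hf).comp ((tendsto_add_atTop_nat 1).comp hφ.tendsto_atTop)
    refine le_of_tendsto (h1.sub h2).abs (Eventually.of_forall fun j => ?_)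
    simp only [Function.comp, hE]
    rw [← sub_div, ← Finset.sum_sub_distrib, abs_div, Nat.abs_cast, div_le_iff₀ (by positivity)]
    refine (Finset.abs_sum_le_sum_abs _ _).trans ?_
    refine (Finset.sum_le_card_nsmul _ _ δ fun i _ => (hu f hf _ _ (hclose i)).le).trans ?_
    simp [mul_comm]


/-- The set of measures associated with the sequences `(β ^ n mod 1)` is dense in the space
of probability measures on the torus `ℝ/ℤ` (with the topology of weak convergence): for
every probability measure `μ` on the torus and every neighborhood `U` of `μ`, there are a
real `β > 1`, a probability measure `ν ∈ U` and a strictly increasing sequence `N` of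
positive integers along which the empirical measures of `(β ^ n mod 1)` converge weakly
to `ν`. -/
theorem associated_measures_dense (μ : ProbabilityMeasure UnitAddCircle)
    (U : Set (ProbabilityMeasure UnitAddCircle)) (hU : U ∈ 𝓝 μ) :
    ∃ (β : ℝ) (ν : ProbabilityMeasure UnitAddCircle) (N : ℕ → ℕ),
      1 < β ∧ StrictMono N ∧ 1 ≤ N 0 ∧
      (∀ f : UnitAddCircle →ᵇ ℝ,
        Tendsto
          (fun j : ℕ =>
            (∑ n ∈ Finset.Icc 1 (N j), f ((β ^ n : ℝ) : UnitAddCircle)) / (N j : ℝ))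
          atTop (𝓝 (∫ x, f x ∂(ν : Measure UnitAddCircle)))) ∧
      ν ∈ U := by
  classical
  choose V B N h1 h2 using fun p : Finset (UnitAddCircle →ᵇ ℝ) × ℕ =>
    aux_main μ p.1 (1 / ((p.2 : ℝ) + 1)) (by positivity)
  have hV : Tendsto V atTop (𝓝 μ) := by
    rw [ProbabilityMeasure.tendsto_iff_forall_integral_tendsto]
    intro f
    rw [Metric.tendsto_atTop]
    intro ε hε
    obtain ⟨k, hk⟩ := exists_nat_one_div_lt hε
    refine ⟨({f}, k), fun p hp => ?_⟩
    rw [Real.dist_eq]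
    refine (h2 p f (hp.1 (by simp))).trans_lt (lt_of_le_of_lt ?_ hk)
    have : (k : ℝ) ≤ p.2 := by exact_mod_cast hp.2
    exact one_div_le_one_div_of_le (by positivity) (by linarith)
  obtain ⟨p, hp⟩ := (hV.eventually hU).exists
  exact ⟨B p, V p, N p, (h1 p).1, (h1 p).2.1, (h1 p).2.2.1, (h1 p).2.2.2, hp⟩
end
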